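/- Let l ∈ ℝ² with |l| = 1 and λ > 0 with λl ∈ ℤ². Let a ∈ C^∞(𝕋²) be real valued and set g(x) = a(x) cos(λ l·x). Then Λg = λg + (l·∇a) sin(λ l·x) + (T^{(1)}_{λl} a) cos(λ l·x) + (T^{(2)}_{λl} a) sin(λ l·x). -/

import Mathlib

open MeasureTheory Complex Filter

noncomputable section

abbrev Z2 := ℤ × ℤ

/-- dot product of an integer frequency with a point of `ℝ²` -/
def dotZ (k : Z2) (x : ℝ × ℝ) : ℝ := (k.1 : ℝ) * x.1 + (k.2 : ℝ) * x.2

/-- Euclidean norm of an integer frequency -/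
def knorm (k : Z2) : ℝ := Real.sqrt ((k.1 : ℝ) ^ 2 + (k.2 : ℝ) ^ 2)

/-- Euclidean norm on `ℝ²` (realized as `ℝ × ℝ`) -/
def e2 (x : ℝ × ℝ) : ℝ := Real.sqrt (x.1 ^ 2 + x.2 ^ 2)

/-- the fundamental domain `[-π, π]²` of the torus -/
def Q2 : Set (ℝ × ℝ) := Set.Icc (-Real.pi, -Real.pi) (Real.pi, Real.pi)

/-- `2π`-periodicity in both variables -/
def Periodic2 (f : ℝ × ℝ → ℂ) : Prop :=
  ∀ x : ℝ × ℝ, f (x.1 + 2 * Real.pi, x.2) = f x ∧ f (x.1, x.2 + 2 * Real.pi) = f x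

def RealValued (f : ℝ × ℝ → ℂ) : Prop := ∀ x, (f x).im = 0

/-- Fourier coefficient `f̂(k) = (2π)⁻² ∫_{𝕋²} f(x) e^{-ik⋅x} dx` -/
def fCoeff (f : ℝ × ℝ → ℂ) (k : Z2) : ℂ :=
  (1 / (2 * Real.pi) ^ 2 : ℂ) * ∫ x in Q2, f x * Complex.exp (-Complex.I * (dotZ k x : ℝ))

/-- Fourier multiplier operator with symbol `m` -/
def Tmult (m : Z2 → ℂ) (f : ℝ × ℝ → ℂ) : ℝ × ℝ → ℂ :=
  fun x => ∑' k : Z2, m k * fCoeff f k * Complex.exp (Complex.I * (dotZ k x : ℝ))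

/-- `Λ^s = (-Δ)^{s/2}`, the multiplier with symbol `|k|^s` (killing `k = 0` for `s ≤ 0`) -/
def Lam (s : ℝ) : (ℝ × ℝ → ℂ) → (ℝ × ℝ → ℂ) :=
  Tmult fun k => if k = 0 then 0 else ((knorm k ^ s : ℝ) : ℂ)

/-- symbol of the Riesz transform `R_j`, `i k_j / |k|` -/
def rieszSym (j : Fin 2) (k : Z2) : ℂ :=
  if k = 0 then 0
  else Complex.I * ((if j = 0 then (k.1 : ℝ) else (k.2 : ℝ)) : ℂ) / ((knorm k : ℝ) : ℂ)

/-- the Riesz transform `R_j` -/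
def Riesz (j : Fin 2) : (ℝ × ℝ → ℂ) → (ℝ × ℝ → ℂ) := Tmult (rieszSym j)

/-- symbol of the modified Riesz-type transforms `R_j^o` of Lemma 2.2 -/
def RoSym (j : Fin 2) (k : Z2) : ℝ :=
  if k = 0 then 0
  else if j = 0 then 25 * ((k.2 : ℝ) ^ 2 - (k.1 : ℝ) ^ 2) / (12 * ((k.1 : ℝ) ^ 2 + (k.2 : ℝ) ^ 2))
  else 7 * ((k.2 : ℝ) ^ 2 - (k.1 : ℝ) ^ 2) / (12 * ((k.1 : ℝ) ^ 2 + (k.2 : ℝ) ^ 2))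
      + 4 * (k.1 : ℝ) * (k.2 : ℝ) / ((k.1 : ℝ) ^ 2 + (k.2 : ℝ) ^ 2)

/-- the Riesz-type transforms `R_j^o` -/
def Ro (j : Fin 2) : (ℝ × ℝ → ℂ) → (ℝ × ℝ → ℂ) := Tmult fun k => ((RoSym j k : ℝ) : ℂ)

/-- symbol of `Δ⁻¹` (mean annihilated) -/
def deltaInvSym (k : Z2) : ℂ := if k = 0 then 0 else -1 / ((knorm k ^ 2 : ℝ) : ℂ)

/-- directional derivative `(v ⋅ ∇) f` -/
def dirD (v : ℝ × ℝ) (f : ℝ × ℝ → ℂ) : ℝ × ℝ → ℂ := fun x => fderiv ℝ f x v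

/-- partial derivative `∂_j f` -/
def pd (j : Fin 2) (f : ℝ × ℝ → ℂ) : ℝ × ℝ → ℂ :=
  dirD (if j = 0 then ((1 : ℝ), (0 : ℝ)) else ((0 : ℝ), (1 : ℝ))) f

/-- sup norm on the torus -/
def supNorm (f : ℝ × ℝ → ℂ) : ℝ := ⨆ x : ℝ × ℝ, ‖f x‖

/-- the `X`-norm `‖q‖_X = ‖q‖_∞ + ‖R₁^o q‖_∞ + ‖R₂^o q‖_∞` -/
def Xnorm (q : ℝ × ℝ → ℂ) : ℝ := supNorm q + supNorm (Ro 0 q) + supNorm (Ro 1 q)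

/-- the vectors `l₁ = (3/5, 4/5)` and `l₂ = (1,0)` -/
def l1 : ℝ × ℝ := (3 / 5, 4 / 5)
def l2 : ℝ × ℝ := (1, 0)

/-- the rotation `l ↦ l^⊥` -/
def perp (l : ℝ × ℝ) : ℝ × ℝ := (-l.2, l.1)

/-- symbol view of frequencies as real vectors -/
def toR (k : Z2) : ℝ × ℝ := ((k.1 : ℝ), (k.2 : ℝ))

/-- the operator `T^{(1)}_{λl}` (where `κ = λl ∈ ℤ²`) -/
def T1op (κ : Z2) (lam : ℝ) : (ℝ × ℝ → ℂ) → (ℝ × ℝ → ℂ) :=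
  Tmult fun k => (((knorm (κ + k) + knorm (κ - k)) / 2 - lam : ℝ) : ℂ)

/-- the operator `T^{(2)}_{λl}` (where `κ = λl ∈ ℤ²`) -/
def T2op (κ : Z2) (l : ℝ × ℝ) : (ℝ × ℝ → ℂ) → (ℝ × ℝ → ℂ) :=
  Tmult fun k =>
    Complex.I * (((knorm (κ + k) - knorm (κ - k)) / 2 - (l.1 * (k.1 : ℝ) + l.2 * (k.2 : ℝ)) : ℝ) : ℂ)

/-- the functions `a_j = 2 √(r/den) √(C₀ + R_j^o q / r)` -/
def aPerf (q : ℝ × ℝ → ℂ) (r den C₀ : ℝ) (j : Fin 2) : ℝ × ℝ → ℂ :=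
  fun x => ((2 * Real.sqrt (r / den) * Real.sqrt (C₀ + (Ro j q x).re / r) : ℝ) : ℂ)

/-- `λ_n = ⌈λ₀^{bⁿ}⌉` -/
def lamSeq (lam0 : ℕ) (b : ℝ) (n : ℕ) : ℕ := ⌈((lam0 : ℝ)) ^ (b ^ n)⌉₊

/-- `r_n = λ_n^{-β}` -/
def rSeq (lam0 : ℕ) (b β : ℝ) (n : ℕ) : ℝ := ((lamSeq lam0 b n : ℝ)) ^ (-β)

/-- `μ_{n+1} = (λ_n λ_{n+1})^{1/2}` -/
def muSeq (lam0 : ℕ) (b : ℝ) (n : ℕ) : ℝ :=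
  Real.sqrt ((lamSeq lam0 b n : ℝ) * (lamSeq lam0 b (n + 1) : ℝ))

/-- smooth Fourier cutoff `P_{≤μ}` associated to a bump `ψ` -/
def Pcut (ψ : ℝ × ℝ → ℝ) (μ : ℝ) : (ℝ × ℝ → ℂ) → (ℝ × ℝ → ℂ) :=
  Tmult fun k => ((ψ ((k.1 : ℝ) / μ, (k.2 : ℝ) / μ) : ℝ) : ℂ)

/-- bilinear multiplier with symbol the Fourier transform of a kernel `K ∈ L¹(ℝ²×ℝ²)` -/
def mOf (K : (ℝ × ℝ) × (ℝ × ℝ) → ℂ) (ξ η : ℝ × ℝ) : ℂ :=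
  ∫ z : (ℝ × ℝ) × (ℝ × ℝ),
    K z * Complex.exp (-Complex.I * ((ξ.1 * z.1.1 + ξ.2 * z.1.2 + η.1 * z.2.1 + η.2 * z.2.2 : ℝ) : ℂ))

/-- the bilinear multiplier operator associated to a kernel `K ∈ L¹(ℝ²×ℝ²)` -/
def Tbil (K : (ℝ × ℝ) × (ℝ × ℝ) → ℂ) (f g : ℝ × ℝ → ℂ) : ℝ × ℝ → ℂ :=
  fun x => ∑' k : Z2,
    (∑' k' : Z2, mOf K (toR k') (toR (k - k')) * fCoeff f k' * fCoeff g (k - k'))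
      * Complex.exp (Complex.I * (dotZ k x : ℝ))

/-- Fourier coefficients of the commutator `[R_j, φ]θ`, computed from those of `φ` and `θ` -/
def commCoeff (j : Fin 2) (φh c : Z2 → ℂ) (k : Z2) : ℂ :=
  ∑' k' : Z2, (rieszSym j k - rieszSym j k') * φh (k - k') * c k'

/-
Multiplication by `e^{iκ·x}` translates Fourier coefficients by `κ`, so it conjugates `Λ` into the
multiplier `Λ_κ` with symbol `|κ + k|`.  Splitting the cosine into exponentials gives
`Λ(a cos(κ·x)) = (e^{iκ·x} Λ_κ a + e^{-iκ·x} Λ_{-κ} a) / 2`, that is,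
`½(Λ_κ + Λ_{-κ})a · cos(κ·x) + (i/2)(Λ_κ - Λ_{-κ})a · sin(κ·x)`.  The symbol of `T⁽¹⁾` is that of
`½(Λ_κ + Λ_{-κ})` minus `λ`, and the symbol of `T⁽²⁾` is that of `(i/2)(Λ_κ - Λ_{-κ})` minus the
symbol `i l·k` of `l·∇`; adding back the subtracted parts, identified with `λa` and `l·∇a` by
Fourier inversion, produces the four terms.
-/

/-- The character `e^{ik·x}` of the torus. -/
def torusChar (k : Z2) (x : ℝ × ℝ) : ℂ := Complex.exp (Complex.I * (dotZ k x : ℝ))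

/-- The operator with symbol `|κ + k|`, which is `Λ` conjugated by the modulation `e^{iκ·x}`. -/
def LamShift (κ : Z2) : (ℝ × ℝ → ℂ) → (ℝ × ℝ → ℂ) := Tmult fun k => (knorm (κ + k) : ℂ)

section Frequencies

lemma dotZ_add (k k' : Z2) (x : ℝ × ℝ) : dotZ (k + k') x = dotZ k x + dotZ k' x := by
  simp only [dotZ, Prod.fst_add, Prod.snd_add, Int.cast_add]
  ring

lemma dotZ_neg (k : Z2) (x : ℝ × ℝ) : dotZ (-k) x = -dotZ k x := by
  simp only [dotZ, Prod.fst_neg, Prod.snd_neg, Int.cast_neg]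
  ring

lemma abs_fst_le_norm (k : Z2) : |(k.1 : ℝ)| ≤ ‖k‖ := by
  simpa only [Int.norm_eq_abs] using norm_fst_le k

lemma abs_snd_le_norm (k : Z2) : |(k.2 : ℝ)| ≤ ‖k‖ := by
  simpa only [Int.norm_eq_abs] using norm_snd_le k

lemma norm_eq_max_abs (k : Z2) : ‖k‖ = max |(k.1 : ℝ)| |(k.2 : ℝ)| := by
  simp only [Prod.norm_def, Int.norm_eq_abs]

lemma abs_dotZ_le (k : Z2) (v : ℝ × ℝ) : |dotZ k v| ≤ (|v.1| + |v.2|) * ‖k‖ :=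
  calc |dotZ k v| ≤ |(k.1 : ℝ)| * |v.1| + |(k.2 : ℝ)| * |v.2| := by
        simpa only [dotZ, abs_mul] using abs_add_le ((k.1 : ℝ) * v.1) (k.2 * v.2)
    _ ≤ ‖k‖ * |v.1| + ‖k‖ * |v.2| := by
        gcongr
        exacts [abs_fst_le_norm k, abs_snd_le_norm k]
    _ = (|v.1| + |v.2|) * ‖k‖ := by ring

lemma knorm_nonneg (k : Z2) : 0 ≤ knorm k := Real.sqrt_nonneg _

lemma knorm_neg (k : Z2) : knorm (-k) = knorm k := by
  simp [knorm]

lemma knorm_sub_eq_knorm_neg_add (κ k : Z2) : knorm (κ - k) = knorm (-κ + k) := by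
  rw [← knorm_neg, neg_sub, sub_eq_neg_add]

lemma knorm_le_two_mul_norm (k : Z2) : knorm k ≤ 2 * ‖k‖ :=
  calc knorm k ≤ |(k.1 : ℝ)| + |(k.2 : ℝ)| := by
        simpa [knorm, Complex.norm_eq_sqrt_sq_add_sq]
          using Complex.norm_le_abs_re_add_abs_im (k.1 + k.2 * Complex.I)
    _ ≤ 2 * ‖k‖ := by linarith [abs_fst_le_norm k, abs_snd_le_norm k]

lemma one_le_norm_of_ne_zero {k : Z2} (hk : k ≠ 0) : 1 ≤ ‖k‖ := by
  have : 0 < ‖k‖ := norm_pos_iff.mpr hk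
  rw [norm_eq_max_abs] at this ⊢
  exact_mod_cast Int.add_one_le_iff.mpr (by exact_mod_cast this : (0 : ℤ) < max |k.1| |k.2|)

lemma isBigO_const_norm (c : ℂ) : (fun _ : Z2 => c) =O[cofinite] fun k : Z2 => ‖k‖ := by
  refine Asymptotics.IsBigO.of_bound ‖c‖ ?_
  filter_upwards [eventually_cofinite_ne (0 : Z2)] with k hk
  rw [norm_norm]
  exact le_mul_of_one_le_right (norm_nonneg c) (one_le_norm_of_ne_zero hk)

lemma isBigO_knorm_add (κ : Z2) :
    (fun k => (knorm (κ + k) : ℂ)) =O[cofinite] fun k : Z2 => ‖k‖ := by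
  have hbound : (fun k => (knorm (κ + k) : ℂ)) =O[cofinite] fun k : Z2 => ‖κ‖ + ‖k‖ := by
    refine Asymptotics.IsBigO.of_bound 2 (Eventually.of_forall fun k => ?_)
    rw [Complex.norm_of_nonneg (knorm_nonneg _), Real.norm_of_nonneg (by positivity)]
    linarith [knorm_le_two_mul_norm (κ + k), norm_add_le κ k]
  have hconst : (fun _ : Z2 => ‖κ‖) =O[cofinite] fun k : Z2 => ‖k‖ := by
    simpa using (isBigO_const_norm (‖κ‖ : ℂ)).norm_left
  exact hbound.trans (hconst.add (Asymptotics.isBigO_refl _ _))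

lemma isBigO_dotZ (v : ℝ × ℝ) : (fun k => (dotZ k v : ℂ)) =O[cofinite] fun k : Z2 => ‖k‖ := by
  refine Asymptotics.IsBigO.of_bound (|v.1| + |v.2|) (Eventually.of_forall fun k => ?_)
  simpa only [Complex.norm_real, Real.norm_eq_abs, norm_norm, abs_norm] using abs_dotZ_le k v

lemma summable_norm_rpow_neg {s : ℝ} (hs : 2 < s) : Summable fun k : Z2 => ‖k‖ ^ (-s) := by
  rw [← (finTwoArrowEquiv ℤ).summable_iff]
  refine (EisensteinSeries.summable_one_div_norm_rpow hs).congr fun k => ?_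
  simp [EisensteinSeries.norm_eq_max_natAbs, Prod.norm_def, Int.norm_eq_abs]

end Frequencies

section Characters

lemma torusChar_add (k k' : Z2) (x : ℝ × ℝ) :
    torusChar (k + k') x = torusChar k x * torusChar k' x := by
  simp only [torusChar, dotZ_add, Complex.ofReal_add, mul_add, Complex.exp_add]

lemma norm_torusChar (k : Z2) (x : ℝ × ℝ) : ‖torusChar k x‖ = 1 :=
  Complex.norm_exp_I_mul_ofReal (dotZ k x)

lemma contDiff_torusChar {n : WithTop ℕ∞} (k : Z2) : ContDiff ℝ n (torusChar k) := by
  have hdot : ContDiff ℝ n (dotZ k) := by unfold dotZ; fun_prop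
  exact (contDiff_const.mul (Complex.ofRealCLM.contDiff.comp hdot)).cexp

lemma continuous_torusChar (k : Z2) : Continuous (torusChar k) :=
  (contDiff_torusChar (n := 0) k).continuous

lemma ofReal_cos_dotZ (k : Z2) (x : ℝ × ℝ) :
    (Real.cos (dotZ k x) : ℂ) = (torusChar k x + torusChar (-k) x) / 2 := by
  simp only [torusChar, dotZ_neg, Complex.ofReal_cos, Complex.cos, Complex.ofReal_neg]
  ring_nf

lemma ofReal_sin_dotZ (k : Z2) (x : ℝ × ℝ) :
    (Real.sin (dotZ k x) : ℂ) = (torusChar (-k) x - torusChar k x) * Complex.I / 2 := by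
  simp only [torusChar, dotZ_neg, Complex.ofReal_sin, Complex.sin, Complex.ofReal_neg]
  ring_nf

lemma periodic2_torusChar (k : Z2) : Periodic2 (torusChar k) := by
  refine fun x => ⟨Complex.exp_eq_exp_iff_exists_int.mpr ⟨k.1, ?_⟩,
    Complex.exp_eq_exp_iff_exists_int.mpr ⟨k.2, ?_⟩⟩ <;>
  · simp only [dotZ]
    push_cast
    ring

lemma dirD_torusChar (v : ℝ × ℝ) (k : Z2) (x : ℝ × ℝ) :
    dirD v (torusChar k) x = Complex.I * dotZ k v * torusChar k x := by
  have hdot : HasFDerivAt (dotZ k)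
      ((k.1 : ℝ) • ContinuousLinearMap.fst ℝ ℝ ℝ + (k.2 : ℝ) • ContinuousLinearMap.snd ℝ ℝ ℝ) x :=
    (hasFDerivAt_fst.const_mul _).add (hasFDerivAt_snd.const_mul _)
  have hchar : HasFDerivAt (torusChar k) _ x :=
    ((Complex.ofRealCLM.hasFDerivAt.comp x hdot).const_mul Complex.I).cexp
  rw [dirD, hchar.fderiv]
  simp only [Complex.ofRealCLM_apply, smul_apply, ContinuousLinearMap.comp_apply, add_apply,
    ContinuousLinearMap.coe_fst', ContinuousLinearMap.coe_snd', smul_eq_mul, torusChar, dotZ,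
    Function.comp_apply]
  ring

end Characters

section PeriodicFunctions

variable {f g : ℝ × ℝ → ℂ}

lemma Periodic2.mul (hf : Periodic2 f) (hg : Periodic2 g) : Periodic2 fun x => f x * g x :=
  fun x => ⟨by simp only [(hf x).1, (hg x).1], by simp only [(hf x).2, (hg x).2]⟩

lemma Periodic2.map_add_int_mul (hf : Periodic2 f) (x : ℝ × ℝ) (m n : ℤ) :
    f (x.1 + m * (2 * Real.pi), x.2 + n * (2 * Real.pi)) = f x := by
  have hfst : Function.Periodic (fun s => f (s, x.2 + n * (2 * Real.pi))) (2 * Real.pi) :=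
    fun s => (hf (s, _)).1
  have hsnd : Function.Periodic (fun t => f (x.1, t)) (2 * Real.pi) := fun t => (hf (_, t)).2
  exact (hfst.int_mul m x.1).trans (hsnd.int_mul n x.2)

lemma Periodic2.map_pi_fst (hf : Periodic2 f) (s : ℝ) : f (Real.pi, s) = f (-Real.pi, s) := by
  simpa [two_mul] using (hf (-Real.pi, s)).1

lemma Periodic2.map_pi_snd (hf : Periodic2 f) (s : ℝ) : f (s, Real.pi) = f (s, -Real.pi) := by
  simpa [two_mul] using (hf (s, -Real.pi)).2

lemma periodic2_dirD (hf : Periodic2 f) (v : ℝ × ℝ) : Periodic2 (dirD v f) := by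
  have hshift (w : ℝ × ℝ) (hw : ∀ y, f (y + w) = f y) (x : ℝ × ℝ) :
      dirD v f (x + w) = dirD v f x := by
    simp only [dirD, ← fderiv_comp_add_right, hw]
  intro x
  have hfst := hshift (2 * Real.pi, 0) (fun y => by simpa [Prod.add_def] using (hf y).1) x
  have hsnd := hshift (0, 2 * Real.pi) (fun y => by simpa [Prod.add_def] using (hf y).2) x
  simp only [Prod.add_def, add_zero] at hfst hsnd
  exact ⟨hfst, hsnd⟩

lemma dirD_eq_pd (v : ℝ × ℝ) (f : ℝ × ℝ → ℂ) (x : ℝ × ℝ) :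
    dirD v f x = v.1 * pd 0 f x + v.2 * pd 1 f x := by
  have hv : v = v.1 • ((1 : ℝ), (0 : ℝ)) + v.2 • ((0 : ℝ), (1 : ℝ)) := by simp
  conv_lhs => rw [dirD, hv, map_add, map_smul, map_smul]
  simp [pd, dirD]

lemma contDiff_dirD {m n : WithTop ℕ∞} (hf : ContDiff ℝ n f) (hmn : m + 1 ≤ n) (v : ℝ × ℝ) :
    ContDiff ℝ m (dirD v f) :=
  (hf.fderiv_right hmn).clm_apply contDiff_const

lemma integrableOn_Q2 (hf : Continuous f) : IntegrableOn f Q2 :=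
  hf.continuousOn.integrableOn_compact isCompact_Icc

-- The divergence theorem for the field `f v`: opposite sides of the square cancel by periodicity.
lemma integral_dirD_eq_zero (hf : ContDiff ℝ 1 f) (hp : Periodic2 f) (v : ℝ × ℝ) :
    ∫ x in Q2, dirD v f x = 0 := by
  have hderiv (c : ℝ) (x : ℝ × ℝ) :
      HasFDerivAt (fun y => (c : ℂ) * f y) ((c : ℂ) • fderiv ℝ f x) x :=
    ((hf.differentiable one_ne_zero) x).hasFDerivAt.const_mul _
  have hdiv (x : ℝ × ℝ) : dirD v f x
      = ((v.1 : ℂ) • fderiv ℝ f x) (1, 0) + ((v.2 : ℂ) • fderiv ℝ f x) (0, 1) := by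
    rw [dirD_eq_pd]
    simp [pd, dirD]
  have hint : IntegrableOn (dirD v f) Q2 :=
    integrableOn_Q2 (contDiff_dirD (m := 0) hf (by norm_num) v).continuous
  have hcont (c : ℝ) : Continuous fun y => (c : ℂ) * f y := continuous_const.mul hf.continuous
  have hle : ((-Real.pi, -Real.pi) : ℝ × ℝ) ≤ (Real.pi, Real.pi) := by
    simp [Prod.le_def, Real.pi_pos.le]
  simp only [funext hdiv] at hint ⊢
  rw [Q2, integral_divergence_prod_Icc_of_hasFDerivAt_of_le _ _ _ _ _ _ hle
    (hcont v.1).continuousOn (hcont v.2).continuousOn (fun x _ => hderiv v.1 x)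
    (fun x _ => hderiv v.2 x) hint]
  simp [hp.map_pi_fst, hp.map_pi_snd]

end PeriodicFunctions

section FourierCoefficients

variable {f : ℝ × ℝ → ℂ}

lemma fCoeff_eq (f : ℝ × ℝ → ℂ) (k : Z2) :
    fCoeff f k = (1 / (2 * Real.pi) ^ 2 : ℂ) * ∫ x in Q2, f x * torusChar (-k) x := by
  simp only [fCoeff, torusChar, dotZ_neg, Complex.ofReal_neg, mul_neg, neg_mul]

lemma fCoeff_mul_torusChar (f : ℝ × ℝ → ℂ) (κ k : Z2) :
    fCoeff (fun x => f x * torusChar κ x) k = fCoeff f (k - κ) := by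
  simp only [fCoeff_eq, mul_assoc, ← torusChar_add]
  rw [neg_sub, sub_eq_add_neg]

lemma fCoeff_mul_cos (hf : Continuous f) (κ k : Z2) :
    fCoeff (fun x => f x * Real.cos (dotZ κ x)) k
      = (fCoeff (fun x => f x * torusChar κ x) k
          + fCoeff (fun x => f x * torusChar (-κ) x) k) / 2 := by
  have hint (κ' : Z2) :
      Integrable (fun x => f x * torusChar κ' x * torusChar (-k) x) (volume.restrict Q2) :=
    integrableOn_Q2 ((hf.mul (continuous_torusChar κ')).mul (continuous_torusChar (-k)))
  simp only [fCoeff_eq]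
  rw [← mul_add, ← integral_add (hint κ) (hint (-κ)), mul_div_assoc, ← integral_div]
  congr 2 with x
  rw [ofReal_cos_dotZ]
  ring

lemma fCoeff_dirD (hf : ContDiff ℝ 1 f) (hp : Periodic2 f) (v : ℝ × ℝ) (k : Z2) :
    fCoeff (dirD v f) k = Complex.I * dotZ k v * fCoeff f k := by
  have hchar : ContDiff ℝ 1 (torusChar (-k)) := contDiff_torusChar (-k)
  have hleibniz (x : ℝ × ℝ) : dirD v (fun y => f y * torusChar (-k) y) x
      = dirD v f x * torusChar (-k) x
        - Complex.I * dotZ k v * (f x * torusChar (-k) x) := by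
    have h := dirD_torusChar v (-k) x
    rw [dotZ_neg] at h
    simp only [dirD] at h ⊢
    rw [fderiv_fun_mul (hf.differentiable one_ne_zero x) (hchar.differentiable one_ne_zero x)]
    simp only [add_apply, smul_apply, smul_eq_mul, h]
    push_cast
    ring
  have hzero := integral_dirD_eq_zero (hf.mul hchar) (hp.mul (periodic2_torusChar (-k))) v
  have hint : IntegrableOn (fun x => dirD v f x * torusChar (-k) x) Q2 := integrableOn_Q2
    ((contDiff_dirD (m := 0) hf (by norm_num) v).continuous.mul hchar.continuous)
  have hint' : IntegrableOn (fun x => f x * torusChar (-k) x) Q2 :=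
    integrableOn_Q2 (hf.mul hchar).continuous
  simp only [hleibniz] at hzero
  rw [integral_sub hint (hint'.const_mul _), integral_const_mul, sub_eq_zero] at hzero
  rw [fCoeff_eq, fCoeff_eq, hzero]
  ring

end FourierCoefficients

section Decay

variable {f : ℝ × ℝ → ℂ}

lemma norm_fCoeff_le (f : ℝ × ℝ → ℂ) (k : Z2) :
    ‖fCoeff f k‖ ≤ ‖(1 / (2 * Real.pi) ^ 2 : ℂ)‖ * ∫ x in Q2, ‖f x‖ := by
  rw [fCoeff_eq, norm_mul]
  gcongr
  refine (norm_integral_le_integral_norm _).trans_eq ?_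
  simp only [norm_mul, norm_torusChar, mul_one]

lemma exists_abs_dotZ_pow_mul_norm_fCoeff_le {n : ℕ} (hf : ContDiff ℝ n f) (hp : Periodic2 f)
    (v : ℝ × ℝ) : ∃ C, ∀ k, |dotZ k v| ^ n * ‖fCoeff f k‖ ≤ C := by
  induction n generalizing f with
  | zero => simpa only [pow_zero, one_mul] using ⟨_, norm_fCoeff_le f⟩
  | succ n ih =>
    obtain ⟨C, hC⟩ := ih (contDiff_dirD hf (by norm_cast) v) (periodic2_dirD hp v)
    refine ⟨C, fun k => le_of_eq_of_le ?_ (hC k)⟩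
    rw [fCoeff_dirD (hf.of_le (by norm_cast; omega)) hp]
    simp only [norm_mul, Complex.norm_I, Complex.norm_real, Real.norm_eq_abs]
    ring

lemma exists_norm_pow_mul_norm_fCoeff_le {n : ℕ} (hf : ContDiff ℝ n f) (hp : Periodic2 f) :
    ∃ C, ∀ k, ‖k‖ ^ n * ‖fCoeff f k‖ ≤ C := by
  obtain ⟨C₁, hC₁⟩ := exists_abs_dotZ_pow_mul_norm_fCoeff_le hf hp (1, 0)
  obtain ⟨C₂, hC₂⟩ := exists_abs_dotZ_pow_mul_norm_fCoeff_le hf hp (0, 1)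
  refine ⟨max C₁ C₂, fun k => ?_⟩
  rw [norm_eq_max_abs]
  rcases max_choice |(k.1 : ℝ)| |(k.2 : ℝ)| with h | h <;> rw [h]
  · exact le_max_of_le_left (by simpa [dotZ] using hC₁ k)
  · exact le_max_of_le_right (by simpa [dotZ] using hC₂ k)

lemma summable_norm_pow_mul_norm_fCoeff {m : ℕ} (hf : ContDiff ℝ (m + 3 : ℕ) f)
    (hp : Periodic2 f) : Summable fun k => ‖k‖ ^ m * ‖fCoeff f k‖ := by
  obtain ⟨C, hC⟩ := exists_norm_pow_mul_norm_fCoeff_le hf hp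
  refine Summable.of_norm_bounded_eventually
    ((summable_norm_rpow_neg (s := 3) (by norm_num)).mul_left C) ?_
  filter_upwards [eventually_cofinite_ne (0 : Z2)] with k hk
  have hk' : 0 < ‖k‖ := norm_pos_iff.mpr hk
  rw [Real.norm_of_nonneg (by positivity), Real.rpow_neg hk'.le, Real.rpow_ofNat,
    ← div_eq_mul_inv, le_div_iff₀ (by positivity)]
  calc ‖k‖ ^ m * ‖fCoeff f k‖ * ‖k‖ ^ 3 = ‖k‖ ^ (m + 3) * ‖fCoeff f k‖ := by ring
    _ ≤ C := hC k

lemma summable_mul_fCoeff_of_isBigO {m : Z2 → ℂ} (hm : m =O[cofinite] fun k : Z2 => ‖k‖)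
    (hs : Summable fun k => ‖k‖ * ‖fCoeff f k‖) : Summable fun k => m k * fCoeff f k :=
  summable_of_isBigO hs (hm.mul (Asymptotics.isBigO_refl (fCoeff f) _).norm_right)

end Decay

section Inversion

open scoped Pointwise

variable {f : ℝ × ℝ → ℂ}

lemma isQuotientMap_coe_unitAddTorus :
    Topology.IsQuotientMap
      (⟨fun y i => (y i : UnitAddCircle), by fun_prop⟩ : C(Fin 2 → ℝ, UnitAddTorus (Fin 2))) :=
  (IsOpenQuotientMap.piMap fun _ : Fin 2 =>
    QuotientAddGroup.isOpenQuotientMap_mk).isQuotientMap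

lemma Periodic2.map_two_pi_mul_eq (hp : Periodic2 f) {y z : Fin 2 → ℝ}
    (h : (fun i => (y i : UnitAddCircle)) = fun i => (z i : UnitAddCircle)) :
    f (2 * Real.pi * y 0, 2 * Real.pi * y 1) = f (2 * Real.pi * z 0, 2 * Real.pi * z 1) := by
  have hint (i : Fin 2) : ∃ n : ℤ, z i = y i + n := by
    obtain ⟨n, hn⟩ := (AddCircle.coe_eq_zero_iff (x := z i - y i) 1).mp <| by
      rw [AddCircle.coe_sub, congrFun h i, sub_self]
    exact ⟨n, by rw [← sub_eq_iff_eq_add', ← hn, zsmul_one]⟩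
  obtain ⟨m, hm⟩ := hint 0
  obtain ⟨n, hn⟩ := hint 1
  rw [← hp.map_add_int_mul _ m n, hm, hn]
  ring_nf

/-- A continuous doubly `2π`-periodic function as a function on Mathlib's `(ℝ/ℤ)²`; the
coordinates are rescaled by `2π`. -/
def torusLift (hf : Continuous f) (hp : Periodic2 f) : C(UnitAddTorus (Fin 2), ℂ) :=
  isQuotientMap_coe_unitAddTorus.lift
    ⟨fun y : Fin 2 → ℝ => f (2 * Real.pi * y 0, 2 * Real.pi * y 1), by fun_prop⟩
    fun _ _ h => hp.map_two_pi_mul_eq h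

lemma torusLift_coe (hf : Continuous f) (hp : Periodic2 f) (y : Fin 2 → ℝ) :
    torusLift hf hp (fun i => (y i : UnitAddCircle))
      = f (2 * Real.pi * y 0, 2 * Real.pi * y 1) := by
  have h := isQuotientMap_coe_unitAddTorus.lift_comp
    ⟨fun y : Fin 2 → ℝ => f (2 * Real.pi * y 0, 2 * Real.pi * y 1), by fun_prop⟩
    fun _ _ h => hp.map_two_pi_mul_eq h
  exact DFunLike.congr_fun h y

lemma mFourier_coe (k : Z2) (y : Fin 2 → ℝ) :
    UnitAddTorus.mFourier ![k.1, k.2] (fun i => (y i : UnitAddCircle))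
      = torusChar k (2 * Real.pi * y 0, 2 * Real.pi * y 1) := by
  simp only [UnitAddTorus.mFourier, ContinuousMap.coe_mk, Fin.prod_univ_two, fourier_coe_apply,
    ← Complex.exp_add, torusChar, dotZ, Matrix.cons_val_zero, Matrix.cons_val_one]
  congr 1
  push_cast
  ring

lemma smul_Icc_eq_Q2 :
    (2 * Real.pi) • Set.Icc ((-1 / 2, -1 / 2) : ℝ × ℝ) (1 / 2, 1 / 2) = Q2 := by
  refine ((OrderIso.smulRight Real.two_pi_pos).image_Icc _ _).trans ?_
  simp only [OrderIso.smulRight_apply, Prod.smul_mk, smul_eq_mul, Q2]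
  ring_nf

lemma setIntegral_unitCube (g : ℝ × ℝ → ℂ) :
    ∫ y : Fin 2 → ℝ in {y | ∀ i, y i ∈ Set.Ioc (-1 / 2) (-1 / 2 + 1 : ℝ)},
        g (2 * Real.pi * y 0, 2 * Real.pi * y 1)
      = (1 / (2 * Real.pi) ^ 2 : ℂ) * ∫ x in Q2, g x := by
  have hcube : {y : Fin 2 → ℝ | ∀ i, y i ∈ Set.Ioc (-1 / 2) (-1 / 2 + 1 : ℝ)}
      = Set.univ.pi fun _ => Set.Ioc (-1 / 2) (1 / 2) := by
    ext y
    norm_num [Set.mem_pi]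
  have hpre : Set.Icc (fun _ : Fin 2 => (-1 / 2 : ℝ)) (fun _ => 1 / 2)
      = MeasurableEquiv.finTwoArrow ⁻¹' Set.Icc (-1 / 2, -1 / 2) (1 / 2, 1 / 2) := by
    ext y
    simp [Pi.le_def, Fin.forall_fin_two]
  have hscale := Measure.setIntegral_comp_smul_of_pos volume g
    (Set.Icc ((-1 / 2, -1 / 2) : ℝ × ℝ) (1 / 2, 1 / 2)) Real.two_pi_pos
  rw [hcube, volume_pi, setIntegral_congr_set Measure.univ_pi_Ioc_ae_eq_Icc, ← volume_pi, hpre]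
  refine ((volume_preserving_finTwoArrow ℝ).setIntegral_preimage_emb
    (MeasurableEquiv.measurableEmbedding _) (fun p => g ((2 * Real.pi) • p)) _).trans ?_
  rw [hscale, smul_Icc_eq_Q2]
  simp

lemma mFourierCoeff_torusLift (hf : Continuous f) (hp : Periodic2 f) (k : Z2) :
    UnitAddTorus.mFourierCoeff (torusLift hf hp) ![k.1, k.2] = fCoeff f k := by
  have hneg : -![k.1, k.2] = ![(-k).1, (-k).2] := by simp
  rw [UnitAddTorus.mFourierCoeff_eq_integral _ _ fun _ => -1 / 2, hneg, fCoeff_eq,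
    ← setIntegral_unitCube]
  simp only [mFourier_coe, torusLift_coe, smul_eq_mul, mul_comm (torusChar _ _)]

lemma hasSum_fCoeff_mul_torusChar (hf : Continuous f) (hp : Periodic2 f)
    (hs : Summable (fCoeff f)) (x : ℝ × ℝ) :
    HasSum (fun k => fCoeff f k * torusChar k x) (f x) := by
  have hcoeff (k : Z2) :
      UnitAddTorus.mFourierCoeff (torusLift hf hp) ((finTwoArrowEquiv ℤ).symm k) = fCoeff f k :=
    mFourierCoeff_torusLift hf hp k
  have hsum : Summable (UnitAddTorus.mFourierCoeff (torusLift hf hp)) := by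
    rw [← (finTwoArrowEquiv ℤ).symm.summable_iff]
    exact hs.congr fun k => (hcoeff k).symm
  have hx : ((2 * Real.pi * (x.1 / (2 * Real.pi)), 2 * Real.pi * (x.2 / (2 * Real.pi))) : ℝ × ℝ)
      = x := by
    rw [mul_div_cancel₀ _ Real.two_pi_pos.ne', mul_div_cancel₀ _ Real.two_pi_pos.ne']
  have h := UnitAddTorus.hasSum_mFourier_series_apply_of_summable hsum
    fun i => ((![x.1 / (2 * Real.pi), x.2 / (2 * Real.pi)] i : ℝ) : UnitAddCircle)
  rw [← (finTwoArrowEquiv ℤ).symm.hasSum_iff, torusLift_coe] at h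
  convert h using 1
  · ext k
    rw [Function.comp_apply, hcoeff, smul_eq_mul]
    congr 1
    exact (congrArg (torusChar k) hx.symm).trans (mFourier_coe k ![_, _]).symm
  · exact congrArg f hx.symm

end Inversion

section Multipliers

variable {f : ℝ × ℝ → ℂ} {m : Z2 → ℂ}

lemma summable_mul_torusChar {c : Z2 → ℂ} (hc : Summable c) (x : ℝ × ℝ) :
    Summable fun k => c k * torusChar k x :=
  hc.norm.of_norm_bounded fun k => by rw [norm_mul, norm_torusChar, mul_one]

lemma hasSum_Tmult (h : Summable fun k => m k * fCoeff f k) (x : ℝ × ℝ) :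
    HasSum (fun k => m k * fCoeff f k * torusChar k x) (Tmult m f x) :=
  (summable_mul_torusChar h x).hasSum

lemma hasSum_dirD (hf : ContDiff ℝ 1 f) (hp : Periodic2 f) (v : ℝ × ℝ)
    (hs : Summable fun k => dotZ k v * fCoeff f k) (x : ℝ × ℝ) :
    HasSum (fun k => Complex.I * dotZ k v * fCoeff f k * torusChar k x) (dirD v f x) := by
  have hcoeff (k : Z2) : fCoeff (dirD v f) k = Complex.I * (dotZ k v * fCoeff f k) := by
    rw [fCoeff_dirD hf hp, mul_assoc]
  have h := hasSum_fCoeff_mul_torusChar (contDiff_dirD (m := 0) hf (by norm_num) v).continuous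
    (periodic2_dirD hp v) (by simpa only [funext hcoeff] using hs.mul_left Complex.I) x
  simpa only [fCoeff_dirD hf hp] using h

lemma summable_mul_fCoeff_mul_torusChar (κ : Z2)
    (h : Summable fun k => m (κ + k) * fCoeff f k) :
    Summable fun k => m k * fCoeff (fun y => f y * torusChar κ y) k := by
  rw [← (Equiv.addLeft κ).summable_iff]
  simpa only [Function.comp_def, Equiv.coe_addLeft, fCoeff_mul_torusChar, add_sub_cancel_left]
    using h

lemma Tmult_mul_torusChar (m : Z2 → ℂ) (f : ℝ × ℝ → ℂ) (κ : Z2) (x : ℝ × ℝ) :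
    Tmult m (fun y => f y * torusChar κ y) x
      = torusChar κ x * Tmult (fun k => m (κ + k)) f x := by
  calc ∑' k, m k * fCoeff (fun y => f y * torusChar κ y) k * torusChar k x
      = ∑' k, m (κ + k) * fCoeff (fun y => f y * torusChar κ y) (κ + k) * torusChar (κ + k) x :=
        ((Equiv.addLeft κ).tsum_eq _).symm
    _ = ∑' k, torusChar κ x * (m (κ + k) * fCoeff f k * torusChar k x) := by
        refine tsum_congr fun k => ?_
        rw [fCoeff_mul_torusChar, add_sub_cancel_left, torusChar_add]
        ring
    _ = torusChar κ x * Tmult (fun k => m (κ + k)) f x := tsum_mul_left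

lemma Tmult_mul_cos (hf : Continuous f) (κ : Z2)
    (h : Summable fun k => m (κ + k) * fCoeff f k)
    (h' : Summable fun k => m (-κ + k) * fCoeff f k) (x : ℝ × ℝ) :
    Tmult m (fun y => f y * Real.cos (dotZ κ y)) x
      = (torusChar κ x * Tmult (fun k => m (κ + k)) f x
          + torusChar (-κ) x * Tmult (fun k => m (-κ + k)) f x) / 2 := by
  have hsum := ((hasSum_Tmult (summable_mul_fCoeff_mul_torusChar κ h) x).add
    (hasSum_Tmult (summable_mul_fCoeff_mul_torusChar (-κ) h') x)).div_const 2
  rw [Tmult_mul_torusChar, Tmult_mul_torusChar] at hsum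
  refine (tsum_congr fun k => ?_).trans hsum.tsum_eq
  rw [fCoeff_mul_cos hf, torusChar]
  ring

end Multipliers

section Leibniz

variable {a : ℝ × ℝ → ℂ}

lemma Lam_one : Lam 1 = Tmult fun k => (knorm k : ℂ) := by
  unfold Lam
  congr 1 with k
  split_ifs with hk
  · simp [hk, knorm]
  · rw [Real.rpow_one]

lemma summable_knorm_add_mul_fCoeff (hs : Summable fun k => ‖k‖ * ‖fCoeff a k‖) (κ : Z2) :
    Summable fun k => (knorm (κ + k) : ℂ) * fCoeff a k :=
  summable_mul_fCoeff_of_isBigO (isBigO_knorm_add κ) hs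

lemma summable_fCoeff (hs : Summable fun k => ‖k‖ * ‖fCoeff a k‖) : Summable (fCoeff a) := by
  simpa only [one_mul] using summable_mul_fCoeff_of_isBigO (isBigO_const_norm 1) hs

lemma Lam_one_mul_cos (ha : Continuous a) (hs : Summable fun k => ‖k‖ * ‖fCoeff a k‖) (κ : Z2)
    (x : ℝ × ℝ) :
    Lam 1 (fun y => a y * Real.cos (dotZ κ y)) x
      = (torusChar κ x * LamShift κ a x + torusChar (-κ) x * LamShift (-κ) a x) / 2 := by
  rw [Lam_one]
  exact Tmult_mul_cos (m := fun k => knorm k) ha κ (summable_knorm_add_mul_fCoeff hs κ)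
    (summable_knorm_add_mul_fCoeff hs (-κ)) x

lemma T1op_eq (ha : Continuous a) (hap : Periodic2 a)
    (hs : Summable fun k => ‖k‖ * ‖fCoeff a k‖) (κ : Z2) (lam : ℝ) (x : ℝ × ℝ) :
    T1op κ lam a x = (LamShift κ a x + LamShift (-κ) a x) / 2 - lam * a x := by
  have hshift (κ : Z2) := hasSum_Tmult (summable_knorm_add_mul_fCoeff hs κ) x
  have hself := (hasSum_fCoeff_mul_torusChar ha hap (summable_fCoeff hs) x).mul_left (lam : ℂ)
  refine (tsum_congr fun k => ?_).trans
    ((((hshift κ).add (hshift (-κ))).div_const 2).sub hself).tsum_eq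
  simp only [knorm_sub_eq_knorm_neg_add, torusChar]
  push_cast
  ring

lemma T2op_eq (ha : ContDiff ℝ 1 a) (hap : Periodic2 a)
    (hs : Summable fun k => ‖k‖ * ‖fCoeff a k‖) (κ : Z2) (l : ℝ × ℝ) (x : ℝ × ℝ) :
    T2op κ l a x = Complex.I * ((LamShift κ a x - LamShift (-κ) a x) / 2) - dirD l a x := by
  have hshift (κ : Z2) := hasSum_Tmult (summable_knorm_add_mul_fCoeff hs κ) x
  have hdirD := hasSum_dirD ha hap l (summable_mul_fCoeff_of_isBigO (isBigO_dotZ l) hs) x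
  refine (tsum_congr fun k => ?_).trans
    (((((hshift κ).sub (hshift (-κ))).div_const 2).mul_left Complex.I).sub hdirD).tsum_eq
  simp only [knorm_sub_eq_knorm_neg_add, torusChar, dotZ]
  push_cast
  ring

end Leibniz

theorem stmt3_general (l : ℝ × ℝ) (lam : ℝ) (κ : Z2) (hκ1 : (κ.1 : ℝ) = lam * l.1)
    (hκ2 : (κ.2 : ℝ) = lam * l.2) (a : ℝ × ℝ → ℂ) (ha : ContDiff ℝ 1 a) (hap : Periodic2 a)
    (hs : Summable fun k => ‖k‖ * ‖fCoeff a k‖) (x : ℝ × ℝ) :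
    Lam 1 (fun y => a y * ((Real.cos (lam * (l.1 * y.1 + l.2 * y.2)) : ℝ) : ℂ)) x
      = (lam : ℂ) * (a x * ((Real.cos (lam * (l.1 * x.1 + l.2 * x.2)) : ℝ) : ℂ))
        + (l.1 * pd 0 a x + l.2 * pd 1 a x)
            * ((Real.sin (lam * (l.1 * x.1 + l.2 * x.2)) : ℝ) : ℂ)
        + T1op κ lam a x * ((Real.cos (lam * (l.1 * x.1 + l.2 * x.2)) : ℝ) : ℂ)
        + T2op κ l a x * ((Real.sin (lam * (l.1 * x.1 + l.2 * x.2)) : ℝ) : ℂ) := by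
  have hphase (y : ℝ × ℝ) : lam * (l.1 * y.1 + l.2 * y.2) = dotZ κ y := by
    rw [dotZ, hκ1, hκ2]
    ring
  simp only [hphase]
  rw [Lam_one_mul_cos ha.continuous hs, T1op_eq ha.continuous hap hs, T2op_eq ha hap hs,
    ← dirD_eq_pd, ofReal_cos_dotZ, ofReal_sin_dotZ]
  linear_combination (-(torusChar (-κ) x - torusChar κ x)
    * (LamShift κ a x - LamShift (-κ) a x) / 4) * Complex.I_sq

/-- Leibniz Lemma 3.1: for `g(x) = a(x) cos(λ l·x)` with `|l| = 1`, `λl ∈ ℤ²`,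
`Λg = λg + (l·∇a) sin(λl·x) + (T¹_{λl}a) cos(λl·x) + (T²_{λl}a) sin(λl·x)`. -/
theorem stmt3 (l : ℝ × ℝ) (hl : l.1 ^ 2 + l.2 ^ 2 = 1) (lam : ℝ) (hlam : 0 < lam)
    (κ : Z2) (hκ1 : (κ.1 : ℝ) = lam * l.1) (hκ2 : (κ.2 : ℝ) = lam * l.2)
    (a : ℝ × ℝ → ℂ) (ha : ContDiff ℝ (⊤ : ℕ∞) a) (hap : Periodic2 a) (har : RealValued a)
    (x : ℝ × ℝ) :
    Lam 1 (fun y => a y * ((Real.cos (lam * (l.1 * y.1 + l.2 * y.2)) : ℝ) : ℂ)) x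
      = (lam : ℂ) * (a x * ((Real.cos (lam * (l.1 * x.1 + l.2 * x.2)) : ℝ) : ℂ))
        + (l.1 * pd 0 a x + l.2 * pd 1 a x)
            * ((Real.sin (lam * (l.1 * x.1 + l.2 * x.2)) : ℝ) : ℂ)
        + T1op κ lam a x * ((Real.cos (lam * (l.1 * x.1 + l.2 * x.2)) : ℝ) : ℂ)
        + T2op κ l a x * ((Real.sin (lam * (l.1 * x.1 + l.2 * x.2)) : ℝ) : ℂ) :=
  stmt3_general l lam κ hκ1 hκ2 a (mod_cast contDiff_infty.mp ha 1) hap (by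
    simpa only [pow_one] using
      summable_norm_pow_mul_norm_fCoeff (m := 1) (contDiff_infty.mp ha 4) hap) x

end
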